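/- Let Λ > 0, κ > 0 and R > √(3/Λ). There exist ε > 0, C > 0 and Ĥ > 0 (depending only on Λ, κ, R) such that for every C¹ solution h : [0,∞)×[0,R] → ℝ of the reduced Einstein-Λ-scalar field equation Dh = G(h − h̄) with sup_{u≥0,0≤r≤R}(|h(u,r)| + |∂_r h(u,r)|) < ε, the energy ℰ₁(u) := sup_{0≤r≤R}|∂_r h(u,r)| decays exponentially: ℰ₁(u) ≤ C ℰ₁(0) e^{−2Ĥu} for all u ≥ 0. -/

import Mathlib

noncomputable section

open Real Set

/-- Radial average `h̄(u,r) = (1/r)∫₀ʳ h(u,s) ds`, with `h̄(u,0) = h(u,0)`. -/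
def radAvg (h : ℝ → ℝ → ℝ) (u r : ℝ) : ℝ :=
  if r = 0 then h u 0 else (1 / r) * ∫ s in (0:ℝ)..r, h u s

/-- Metric coefficient `f(u,r) = exp((κ/2)∫₀ʳ (h−h̄)²/s ds)`. -/
def metricF (κ : ℝ) (h : ℝ → ℝ → ℝ) (u r : ℝ) : ℝ :=
  Real.exp ((κ / 2) * ∫ s in (0:ℝ)..r, (h u s - radAvg h u s) ^ 2 / s)

/-- Metric coefficient `f̃(u,r) = (1/r)∫₀ʳ f ds − (Λ/r)∫₀ʳ f s² ds`, with `f̃(u,0)=1`. -/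
def metricFt (Λ κ : ℝ) (h : ℝ → ℝ → ℝ) (u r : ℝ) : ℝ :=
  if r = 0 then 1
  else (1 / r) * (∫ s in (0:ℝ)..r, metricF κ h u s)
    - (Λ / r) * (∫ s in (0:ℝ)..r, metricF κ h u s * s ^ 2)

/-- Zeroth order coefficient `G(u,r) = (1/(2r))[(f − f̃) − Λ f r²]`. -/
def coefG (Λ κ : ℝ) (h : ℝ → ℝ → ℝ) (u r : ℝ) : ℝ :=
  (1 / (2 * r)) * ((metricF κ h u r - metricFt Λ κ h u r) - Λ * metricF κ h u r * r ^ 2)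

/-- Partial derivative of `h` in the Bondi time `u`, one-sided on `[0,∞)`. -/
def pdU (h : ℝ → ℝ → ℝ) (u r : ℝ) : ℝ :=
  derivWithin (fun u' => h u' r) (Ici 0) u

/-- Partial derivative of `h` in the radial coordinate `r`, on `[0,R]`. -/
def pdR (R : ℝ) (h : ℝ → ℝ → ℝ) (u r : ℝ) : ℝ :=
  derivWithin (fun r' => h u r') (Icc 0 R) r

/-- `h : [0,∞)×[0,R] → ℝ` is a C¹ solution of the reduced Einstein-Λ-scalar field
equation `Dh = G(h − h̄)`: it is continuous with continuous partial derivatives on the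
rectangular domain and satisfies the equation for `0 < r ≤ R`. -/
def IsC1Solution (Λ κ R : ℝ) (h : ℝ → ℝ → ℝ) : Prop :=
  ContinuousOn (fun p : ℝ × ℝ => h p.1 p.2) (Ici 0 ×ˢ Icc 0 R) ∧
  (∀ u ∈ Ici (0:ℝ), ∀ r ∈ Icc (0:ℝ) R,
      DifferentiableWithinAt ℝ (fun u' => h u' r) (Ici 0) u ∧
      DifferentiableWithinAt ℝ (fun r' => h u r') (Icc 0 R) r) ∧
  ContinuousOn (fun p : ℝ × ℝ => pdU h p.1 p.2) (Ici 0 ×ˢ Icc 0 R) ∧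
  ContinuousOn (fun p : ℝ × ℝ => pdR R h p.1 p.2) (Ici 0 ×ˢ Icc 0 R) ∧
  ∀ u ∈ Ici (0:ℝ), ∀ r ∈ Ioc (0:ℝ) R,
    pdU h u r - metricFt Λ κ h u r / 2 * pdR R h u r
      = coefG Λ κ h u r * (h u r - radAvg h u r)


/-- A continuous function on `[0, R]` has a continuous primitive, differentiable inside. -/
lemma continuousOn_and_hasDerivAt_primitive {g : ℝ → ℝ} {R : ℝ} (hR : 0 < R)
    (hg : ContinuousOn g (Icc 0 R)) :
    ContinuousOn (fun r => ∫ s in (0:ℝ)..r, g s) (Icc 0 R) ∧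
      ∀ r ∈ Ioo 0 R, HasDerivAt (fun r => ∫ s in (0:ℝ)..r, g s) (g r) r := by
  refine ⟨?_, fun r hr => ?_⟩
  · have := intervalIntegral.continuousOn_primitive_interval (μ := MeasureTheory.volume)
      (f := g) (a := 0) (b := R)
      (by rw [uIcc_of_le hR.le]; exact hg.integrableOn_Icc)
    rwa [uIcc_of_le hR.le] at this
  · refine intervalIntegral.integral_hasDerivAt_right ?_ ?_ ?_
    · apply ContinuousOn.intervalIntegrable
      rw [uIcc_of_le hr.1.le]
      exact hg.mono (Icc_subset_Icc_right hr.2.le)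
    · exact (hg.mono Ioo_subset_Icc_self).stronglyMeasurableAtFilter isOpen_Ioo r hr
    · exact hg.continuousAt (Icc_mem_nhds hr.1 hr.2)

/-- Continuity on `[0, R]` from continuity on `(0, R]` and a linear bound at the origin. -/
lemma continuousOn_Icc_of_linear_bound {g : ℝ → ℝ} {R C : ℝ}
    (hg : ContinuousOn g (Ioc 0 R)) (hb : ∀ r ∈ Ioc 0 R, |g r - g 0| ≤ C * r) :
    ContinuousOn g (Icc 0 R) := by
  intro r hr
  rcases eq_or_lt_of_le hr.1 with rfl | h0
  · rw [ContinuousWithinAt, tendsto_iff_norm_sub_tendsto_zero]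
    have hlim : Filter.Tendsto (fun r : ℝ => C * r) (nhdsWithin 0 (Icc 0 R)) (nhds 0) := by
      have : Continuous fun r : ℝ => C * r := by fun_prop
      simpa using (this.tendsto 0).mono_left nhdsWithin_le_nhds
    refine squeeze_zero' (Filter.Eventually.of_forall fun _ => norm_nonneg _) ?_ hlim
    filter_upwards [self_mem_nhdsWithin] with s hs
    rcases eq_or_lt_of_le hs.1 with rfl | h1
    · simp
    · exact hb s ⟨h1, hs.2⟩
  · have h1 : ContinuousWithinAt g (Ioc 0 R) r := hg r ⟨h0, hr.2⟩
    refine h1.mono_of_mem_nhdsWithin ?_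
    have : Ioi (0:ℝ) ∈ nhdsWithin r (Icc 0 R) := mem_nhdsWithin_of_mem_nhds (Ioi_mem_nhds h0)
    filter_upwards [this, self_mem_nhdsWithin] with s hs hs'
    exact ⟨hs, hs'.2⟩

lemma radAvg_of_ne {h : ℝ → ℝ → ℝ} {u r : ℝ} (hr : r ≠ 0) :
    radAvg h u r = (1 / r) * ∫ s in (0:ℝ)..r, h u s := by
  simp [radAvg, hr]

/-- The oscillation of `h` over `[0, r]` bounds its deviation from the radial average. -/
lemma abs_sub_radAvg_le {h : ℝ → ℝ → ℝ} {u r C : ℝ} (hr : 0 ≤ r)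
    (hc : ContinuousOn (h u) (Icc 0 r)) (hb : ∀ s ∈ Icc 0 r, |h u r - h u s| ≤ C) :
    |h u r - radAvg h u r| ≤ C := by
  rcases eq_or_lt_of_le hr with rfl | h0
  · simpa [radAvg] using hb 0 (by simp)
  · have hi : IntervalIntegrable (h u) MeasureTheory.volume 0 r := by
      apply ContinuousOn.intervalIntegrable
      rwa [uIcc_of_le hr]
    have h1 : h u r - radAvg h u r = (1 / r) * ∫ s in (0:ℝ)..r, (h u r - h u s) := by
      rw [intervalIntegral.integral_sub (by simp) hi, radAvg_of_ne h0.ne']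
      simp
      field_simp
    have h2 : ‖∫ s in (0:ℝ)..r, (h u r - h u s)‖ ≤ C * |r - 0| := by
      apply intervalIntegral.norm_integral_le_of_norm_le_const
      intro s hs
      rw [uIoc_of_le hr] at hs
      exact hb s ⟨hs.1.le, hs.2⟩
    rw [h1, abs_mul, abs_of_pos (by positivity : 0 < 1 / r)]
    rw [sub_zero, abs_of_pos h0, norm_eq_abs] at h2
    calc 1 / r * _ ≤ 1 / r * (C * r) := by gcongr
      _ = C := by field_simp

/-- Regularity of the radial average of a Lipschitz function. -/
lemma radAvg_regularity {h : ℝ → ℝ → ℝ} {u R ε : ℝ} (hR : 0 < R)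
    (hc : ContinuousOn (h u) (Icc 0 R))
    (hl : ∀ s ∈ Icc 0 R, ∀ t ∈ Icc 0 R, |h u s - h u t| ≤ ε * |s - t|) (hε : 0 ≤ ε) :
    (∀ r ∈ Icc 0 R, |h u r - radAvg h u r| ≤ ε * r) ∧
    ContinuousOn (radAvg h u) (Icc 0 R) ∧
    ∀ r ∈ Ioo 0 R, HasDerivAt (radAvg h u) ((h u r - radAvg h u r) / r) r := by
  obtain ⟨hpc, hpd⟩ := continuousOn_and_hasDerivAt_primitive hR hc
  have hw : ∀ r ∈ Icc 0 R, |h u r - radAvg h u r| ≤ ε * r := by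
    intro r hr
    refine abs_sub_radAvg_le hr.1 (hc.mono (Icc_subset_Icc_right hr.2)) fun s hs => ?_
    refine (hl r hr s ⟨hs.1, hs.2.trans hr.2⟩).trans ?_
    rw [abs_of_nonneg (by linarith [hs.2])]
    gcongr
    linarith [hs.1]
  refine ⟨hw, ?_, ?_⟩
  · apply continuousOn_Icc_of_linear_bound (C := 2 * ε)
    · have : ContinuousOn (fun r => (1 / r) * ∫ s in (0:ℝ)..r, h u s) (Ioc 0 R) := by
        apply ContinuousOn.mul
        · exact continuousOn_const.div continuousOn_id fun r hr => hr.1.ne'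
        · exact hpc.mono Ioc_subset_Icc_self
      exact this.congr fun r hr => radAvg_of_ne hr.1.ne'
    · intro r hr
      have h1 := hw r ⟨hr.1.le, hr.2⟩
      have h2 := hl r ⟨hr.1.le, hr.2⟩ 0 ⟨le_rfl, hR.le⟩
      rw [sub_zero, abs_of_pos hr.1] at h2
      have h3 : radAvg h u 0 = h u 0 := by simp [radAvg]
      rw [h3]
      rw [abs_le] at *
      constructor <;> linarith [h1.1, h1.2, h2.1, h2.2]
  · intro r hr
    have h0 : r ≠ 0 := hr.1.ne'
    have h1 : HasDerivAt (fun r => (1 / r) * ∫ s in (0:ℝ)..r, h u s)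
        ((-1 / r ^ 2) * (∫ s in (0:ℝ)..r, h u s) + (1 / r) * h u r) r := by
      simp only [one_div]
      exact ((hasDerivAt_inv h0).mul (hpd r hr)).congr_deriv (by field_simp)
    rw [radAvg_of_ne h0]
    have h2 : HasDerivAt (radAvg h u) _ r := h1.congr_of_eventuallyEq (by
      filter_upwards [lt_mem_nhds hr.1] with s hs
      exact radAvg_of_ne (ne_of_gt hs))
    exact h2.congr_deriv (by field_simp; ring)

/-- Size and regularity of `f` for a field with Lipschitz constant `ε`. -/
lemma metricF_bounds {κ R ε : ℝ} {h : ℝ → ℝ → ℝ} {u : ℝ} (hκ : 0 < κ) (hR : 0 < R)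
    (hε : 0 ≤ ε) (hε1 : ε ≤ 1) (hc : ContinuousOn (h u) (Icc 0 R))
    (hl : ∀ s ∈ Icc 0 R, ∀ t ∈ Icc 0 R, |h u s - h u t| ≤ ε * |s - t|) :
    ContinuousOn (metricF κ h u) (Icc 0 R) ∧
    (∀ r ∈ Icc 0 R, 1 ≤ metricF κ h u r ∧
      metricF κ h u r ≤ 1 + κ / 2 * ε ^ 2 * Real.exp (κ / 2 * R ^ 2) * r ^ 2) ∧
    ∀ r ∈ Ioo 0 R, ∃ X, 0 ≤ X ∧ X ≤ κ / 2 * ε ^ 2 * Real.exp (κ / 2 * R ^ 2) ∧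
      HasDerivAt (metricF κ h u) (X * r) r := by
  obtain ⟨hw, hac, -⟩ := radAvg_regularity hR hc hl hε
  have hwsq : ∀ r ∈ Icc 0 R, (h u r - radAvg h u r) ^ 2 ≤ ε ^ 2 * r ^ 2 := by
    intro r hr
    rw [← mul_pow, sq_le_sq, abs_of_nonneg (mul_nonneg hε hr.1)]
    exact hw r hr
  have hgb : ∀ r ∈ Icc 0 R, (h u r - radAvg h u r) ^ 2 / r ≤ ε ^ 2 * r := by
    intro r hr
    rcases eq_or_lt_of_le hr.1 with rfl | h0
    · simp
    · rw [div_le_iff₀ h0]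
      linarith [hwsq r hr]
  have hg0 : ∀ r ∈ Icc 0 R, 0 ≤ (h u r - radAvg h u r) ^ 2 / r := fun r hr =>
    div_nonneg (sq_nonneg _) hr.1
  have hgc : ContinuousOn (fun r => (h u r - radAvg h u r) ^ 2 / r) (Icc 0 R) := by
    apply continuousOn_Icc_of_linear_bound (C := ε ^ 2)
    · apply ContinuousOn.div
      · exact ((hc.sub hac).pow 2).mono Ioc_subset_Icc_self
      · exact continuousOn_id
      · exact fun r hr => hr.1.ne'
    · intro r hr
      have hr' : r ∈ Icc 0 R := ⟨hr.1.le, hr.2⟩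
      simp only [div_zero, sub_zero]
      rw [abs_of_nonneg (hg0 r hr')]
      exact hgb r hr'
  obtain ⟨hIc, hId⟩ := continuousOn_and_hasDerivAt_primitive hR hgc
  have hI : ∀ r ∈ Icc 0 R, 0 ≤ (∫ s in (0:ℝ)..r, (h u s - radAvg h u s) ^ 2 / s) ∧
      (∫ s in (0:ℝ)..r, (h u s - radAvg h u s) ^ 2 / s) ≤ ε ^ 2 * r ^ 2 := by
    intro r hr
    constructor
    · exact intervalIntegral.integral_nonneg hr.1 fun s hs => hg0 s ⟨hs.1, hs.2.trans hr.2⟩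
    · have := intervalIntegral.norm_integral_le_of_norm_le_const (a := 0) (b := r)
        (f := fun s => (h u s - radAvg h u s) ^ 2 / s) (C := ε ^ 2 * r) (by
          intro s hs
          rw [uIoc_of_le hr.1] at hs
          have hs' : s ∈ Icc 0 R := ⟨hs.1.le, hs.2.trans hr.2⟩
          rw [norm_eq_abs, abs_of_nonneg (hg0 s hs')]
          refine (hgb s hs').trans ?_
          gcongr
          exact hs.2)
      rw [sub_zero, abs_of_nonneg hr.1] at this
      calc _ ≤ _ := le_trans (le_abs_self _) this
        _ = _ := by ring
  have hexp : ∀ r ∈ Icc 0 R, metricF κ h u r ≤ Real.exp (κ / 2 * R ^ 2) := by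
    intro r hr
    unfold metricF
    gcongr
    refine (hI r hr).2.trans ?_
    have h1 : ε ^ 2 ≤ 1 := pow_le_one₀ hε hε1
    have h2 : r ^ 2 ≤ R ^ 2 := pow_le_pow_left₀ hr.1 hr.2 2
    calc ε ^ 2 * r ^ 2 ≤ 1 * R ^ 2 := by gcongr
      _ = R ^ 2 := one_mul _
  refine ⟨?_, ?_, ?_⟩
  · exact (continuousOn_const.mul hIc).rexp
  · intro r hr
    obtain ⟨h1, h2⟩ := hI r hr
    constructor
    · exact Real.one_le_exp (by positivity)
    · set x := κ / 2 * ∫ s in (0:ℝ)..r, (h u s - radAvg h u s) ^ 2 / s with hx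
      have hx0 : 0 ≤ x := by positivity
      have hx1 : x ≤ κ / 2 * (ε ^ 2 * r ^ 2) := by rw [hx]; gcongr
      have hE := hexp r hr
      have hF : metricF κ h u r = Real.exp x := rfl
      rw [hF] at hE ⊢
      have h3 : Real.exp x - 1 ≤ x * Real.exp x := by
        have h4 := Real.add_one_le_exp (-x)
        have h5 : Real.exp (-x) * Real.exp x = 1 := by rw [← Real.exp_add]; simp
        nlinarith [Real.exp_pos x]
      have h6 : x * Real.exp x ≤ κ / 2 * (ε ^ 2 * r ^ 2) * Real.exp (κ / 2 * R ^ 2) := by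
        gcongr
      linarith
  · intro r hr
    have hr' : r ∈ Icc 0 R := Ioo_subset_Icc_self hr
    have h0 : r ≠ 0 := hr.1.ne'
    refine ⟨metricF κ h u r * (κ / 2 * ((h u r - radAvg h u r) ^ 2 / r)) / r, ?_, ?_, ?_⟩
    · have := hg0 r hr'
      have h1 : 0 < metricF κ h u r := Real.exp_pos _
      have := hr.1
      positivity
    · rw [div_le_iff₀ hr.1]
      calc metricF κ h u r * (κ / 2 * ((h u r - radAvg h u r) ^ 2 / r))
          ≤ Real.exp (κ / 2 * R ^ 2) * (κ / 2 * (ε ^ 2 * r)) := by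
            gcongr
            · exact mul_nonneg (by positivity) (hg0 r hr')
            · exact hexp r hr'
            · exact hgb r hr'
        _ = _ := by ring
    · exact (((hId r hr).const_mul (κ / 2)).exp).congr_deriv (by
        unfold metricF; field_simp)

/-- Structural properties of the transport speed `V = f̃` and the coefficient `G` used in the
decay estimate; `δ` measures the deviation from the de Sitter values. -/
structure IsDampedCoeff (R δ : ℝ) (V G : ℝ → ℝ) : Prop where
  continuousOn_V : ContinuousOn V (Icc 0 R)
  continuousOn_G : ContinuousOn G (Icc 0 R)
  hasDerivAt_V : ∀ r ∈ Ioo 0 R, HasDerivAt V (2 * G r) r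
  hasDerivAt_G : ∀ r ∈ Ioo 0 R, ∃ g, HasDerivAt G g r ∧ g ≤ 0 ∧ |g - G r / r| ≤ δ
  G_nonpos : ∀ r ∈ Icc 0 R, G r ≤ 0
  V_zero : 0 ≤ V 0
  V_end : V R ≤ 0
  damping : ∀ r ∈ Ioo 0 R, 2 * G r - V r / R ≤ -(1 / R - 2 * R * δ)

/-- Deviation of `f̃` and `G` from multiples of their de Sitter values. -/
lemma metricFt_eq_and_coefG_eq {Λ κ R β : ℝ} {h : ℝ → ℝ → ℝ} {u : ℝ} (hΛ : 0 < Λ)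
    (hβ : 0 ≤ β) (hfc : ContinuousOn (metricF κ h u) (Icc 0 R))
    (hfb : ∀ r ∈ Icc 0 R, 1 ≤ metricF κ h u r ∧ metricF κ h u r ≤ 1 + β * r ^ 2)
    {r : ℝ} (hr : r ∈ Ioc 0 R) :
    ∃ Y, |Y| ≤ β * (1 + Λ * R ^ 2) ∧
      metricFt Λ κ h u r = metricF κ h u r * (1 - Λ * r ^ 2 / 3) - Y * r ^ 2 ∧
      coefG Λ κ h u r = r * (-(Λ / 3) * metricF κ h u r + Y / 2) := by
  have h0 : r ≠ 0 := hr.1.ne'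
  set F := metricF κ h u with hF
  have hfc' : ContinuousOn F (uIcc 0 r) := by
    rw [uIcc_of_le hr.1.le]; exact hfc.mono (Icc_subset_Icc_right hr.2)
  have i1 : IntervalIntegrable F MeasureTheory.volume 0 r := hfc'.intervalIntegrable
  have i2 : IntervalIntegrable (fun s => F s * s ^ 2) MeasureTheory.volume 0 r :=
    (hfc'.mul (by fun_prop)).intervalIntegrable
  have i3 : IntervalIntegrable (fun s => F r * (1 - Λ * s ^ 2)) MeasureTheory.volume 0 r :=
    Continuous.intervalIntegrable (by fun_prop) _ _
  have e1 : ∫ s in (0:ℝ)..r, (F r * (1 - Λ * s ^ 2) - (F s - Λ * (F s * s ^ 2)))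
      = F r * (r - Λ * r ^ 3 / 3) - ((∫ s in (0:ℝ)..r, F s) - Λ * ∫ s in (0:ℝ)..r, F s * s ^ 2) := by
    rw [intervalIntegral.integral_sub i3 (i1.sub (i2.const_mul Λ)),
      intervalIntegral.integral_sub i1 (i2.const_mul Λ), intervalIntegral.integral_const_mul,
      intervalIntegral.integral_const_mul, intervalIntegral.integral_sub (by simp)
        (Continuous.intervalIntegrable (by fun_prop) _ _), intervalIntegral.integral_const_mul,
      integral_pow]
    simp
    left
    ring
  have e2 : ‖∫ s in (0:ℝ)..r, (F r * (1 - Λ * s ^ 2) - (F s - Λ * (F s * s ^ 2)))‖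
      ≤ (β * r ^ 2 * (1 + Λ * R ^ 2)) * |r - 0| := by
    apply intervalIntegral.norm_integral_le_of_norm_le_const
    intro s hs
    rw [uIoc_of_le hr.1.le] at hs
    have b1 := hfb r ⟨hr.1.le, hr.2⟩
    have b2 := hfb s ⟨hs.1.le, hs.2.trans hr.2⟩
    have hsr : s ^ 2 ≤ r ^ 2 := pow_le_pow_left₀ hs.1.le hs.2 2
    have hrR : r ^ 2 ≤ R ^ 2 := pow_le_pow_left₀ hr.1.le hr.2 2
    have b3 : β * s ^ 2 ≤ β * r ^ 2 := by gcongr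
    have b4 : |F r - F s| ≤ β * r ^ 2 := by
      rw [abs_le]; constructor <;> linarith [b1.1, b1.2, b2.1, b2.2]
    have b5 : |1 - Λ * s ^ 2| ≤ 1 + Λ * R ^ 2 := by
      have c1 : 0 ≤ Λ * s ^ 2 := by positivity
      have c2 : Λ * s ^ 2 ≤ Λ * R ^ 2 := mul_le_mul_of_nonneg_left (hsr.trans hrR) hΛ.le
      rw [abs_le]; constructor <;> linarith
    rw [show F r * (1 - Λ * s ^ 2) - (F s - Λ * (F s * s ^ 2))
      = (F r - F s) * (1 - Λ * s ^ 2) by ring, norm_mul]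
    exact mul_le_mul b4 b5 (abs_nonneg _) (by positivity)
  have hV : metricFt Λ κ h u r
      = (1 / r) * (∫ s in (0:ℝ)..r, F s) - (Λ / r) * (∫ s in (0:ℝ)..r, F s * s ^ 2) := by
    simp [metricFt, h0, hF]
  rw [e1, sub_zero, abs_of_pos hr.1, norm_eq_abs] at e2
  have hVr : F r * (r - Λ * r ^ 3 / 3)
      - ((∫ s in (0:ℝ)..r, F s) - Λ * ∫ s in (0:ℝ)..r, F s * s ^ 2)
      = r * (F r * (1 - Λ * r ^ 2 / 3) - metricFt Λ κ h u r) := by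
    rw [hV]; field_simp
  rw [hVr, abs_mul, abs_of_pos hr.1] at e2
  refine ⟨(F r * (1 - Λ * r ^ 2 / 3) - metricFt Λ κ h u r) / r ^ 2, ?_, ?_, ?_⟩
  · have hr2 : 0 < r ^ 2 := by have := hr.1; positivity
    rw [abs_div, abs_of_pos hr2, div_le_iff₀ hr2]
    have := hr.1
    nlinarith
  · field_simp
    ring
  · rw [coefG, ← hF]
    field_simp
    ring

/-- For small fields the coefficients of the reduced equation are damped. -/
lemma isDampedCoeff_metricFt {Λ κ R ε δ : ℝ} {h : ℝ → ℝ → ℝ} {u : ℝ} (hΛ : 0 < Λ) (hκ : 0 < κ)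
    (hR : 0 < R) (hε : 0 ≤ ε) (hε1 : ε ≤ 1) (hc : ContinuousOn (h u) (Icc 0 R))
    (hl : ∀ s ∈ Icc 0 R, ∀ t ∈ Icc 0 R, |h u s - h u t| ≤ ε * |s - t|)
    (hδ : 2 * (κ / 2 * ε ^ 2 * Real.exp (κ / 2 * R ^ 2) * (1 + Λ * R ^ 2)) ≤ δ)
    (hδ1 : δ ≤ Λ / 6) (hδ2 : δ * R ^ 2 ≤ Λ * R ^ 2 / 3 - 1) :
    IsDampedCoeff R δ (metricFt Λ κ h u) (coefG Λ κ h u) := by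
  obtain ⟨hfc, hfb, hfd⟩ := metricF_bounds hκ hR hε hε1 hc hl
  set β := κ / 2 * ε ^ 2 * Real.exp (κ / 2 * R ^ 2) with hβdef
  have hβ : 0 ≤ β := by positivity
  have hY := fun {r : ℝ} (hr : r ∈ Ioc 0 R) =>
    metricFt_eq_and_coefG_eq (Λ := Λ) (κ := κ) (h := h) (u := u) hΛ hβ hfc hfb hr
  set γ := β * (1 + Λ * R ^ 2) with hγ
  have hγ0 : 0 ≤ γ := by positivity
  have hfc2 : ContinuousOn (fun s => metricF κ h u s * s ^ 2) (Icc 0 R) := by fun_prop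
  obtain ⟨hp1, hd1⟩ := continuousOn_and_hasDerivAt_primitive hR hfc
  obtain ⟨hp2, hd2⟩ := continuousOn_and_hasDerivAt_primitive hR hfc2
  have hVeq : ∀ r : ℝ, r ≠ 0 → metricFt Λ κ h u r = (1 / r) * (∫ s in (0:ℝ)..r, metricF κ h u s)
    - (Λ / r) * (∫ s in (0:ℝ)..r, metricF κ h u s * s ^ 2) := fun r hr => by
      simp [metricFt, hr]
  have hV0 : metricFt Λ κ h u 0 = 1 := by simp [metricFt]
  have hG0 : coefG Λ κ h u 0 = 0 := by simp [coefG]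
  have hVc' : ContinuousOn (metricFt Λ κ h u) (Ioc 0 R) := by
    have : ContinuousOn (fun r => (1 / r) * (∫ s in (0:ℝ)..r, metricF κ h u s)
        - (Λ / r) * (∫ s in (0:ℝ)..r, metricF κ h u s * s ^ 2)) (Ioc 0 R) := by
      apply ContinuousOn.sub
      · exact (continuousOn_const.div continuousOn_id fun r hr => hr.1.ne').mul
          (hp1.mono Ioc_subset_Icc_self)
      · exact (continuousOn_const.div continuousOn_id fun r hr => hr.1.ne').mul
          (hp2.mono Ioc_subset_Icc_self)
    exact this.congr fun r hr => hVeq r hr.1.ne'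
  have hVd : ∀ r ∈ Ioo 0 R, HasDerivAt (metricFt Λ κ h u) (2 * coefG Λ κ h u r) r := by
    intro r hr
    have h0 : r ≠ 0 := hr.1.ne'
    have h1 : HasDerivAt (fun r => r⁻¹ * (∫ s in (0:ℝ)..r, metricF κ h u s)
        - Λ * r⁻¹ * (∫ s in (0:ℝ)..r, metricF κ h u s * s ^ 2)) (2 * coefG Λ κ h u r) r := by
      refine (((hasDerivAt_inv h0).mul (hd1 r hr)).sub
        (((hasDerivAt_inv h0).const_mul Λ).mul (hd2 r hr))).congr_deriv ?_
      rw [coefG, hVeq r h0]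
      field_simp
      ring
    refine h1.congr_of_eventuallyEq ?_
    filter_upwards [lt_mem_nhds hr.1] with s hs
    rw [hVeq s hs.ne', one_div, div_eq_mul_inv]
  have hsq : ∀ r ∈ Icc 0 R, r ^ 2 ≤ R ^ 2 := fun r hr => pow_le_pow_left₀ hr.1 hr.2 2
  have hVc : ContinuousOn (metricFt Λ κ h u) (Icc 0 R) := by
    apply continuousOn_Icc_of_linear_bound (C := 2 * γ * R + Λ * R) hVc'
    intro r hr
    have hr' : r ∈ Icc 0 R := ⟨hr.1.le, hr.2⟩
    obtain ⟨Y, hY1, hY2, -⟩ := hY hr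
    obtain ⟨b1, b2⟩ := hfb r hr'
    rw [hV0, hY2]
    set F := metricF κ h u r
    have k1 : |(F - 1) * (1 - Λ * r ^ 2 / 3)| ≤ β * r ^ 2 * (1 + Λ * R ^ 2) := by
      rw [abs_mul]
      have c1 : 0 ≤ Λ * r ^ 2 := by positivity
      have c2 : Λ * r ^ 2 ≤ Λ * R ^ 2 := mul_le_mul_of_nonneg_left (hsq r hr') hΛ.le
      apply mul_le_mul _ _ (abs_nonneg _) (by positivity)
      · rw [abs_of_nonneg (by linarith)]; linarith
      · rw [abs_le]; constructor <;> linarith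
    have k2 : |Y * r ^ 2| ≤ γ * r ^ 2 := by
      rw [abs_mul, abs_of_nonneg (sq_nonneg r)]; gcongr
    have k3 : r ^ 2 ≤ R * r := by rw [sq]; gcongr; exacts [hr.1.le, hr.2]
    have k4 : F * (1 - Λ * r ^ 2 / 3) - Y * r ^ 2 - 1
      = (F - 1) * (1 - Λ * r ^ 2 / 3) - Λ * r ^ 2 / 3 - Y * r ^ 2 := by ring
    have k5 : γ * r ^ 2 ≤ γ * (R * r) := by gcongr
    have k6 : Λ * r ^ 2 ≤ Λ * (R * r) := by gcongr
    have k7 : 0 ≤ Λ * r ^ 2 := by positivity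
    have k8 : β * r ^ 2 * (1 + Λ * R ^ 2) = γ * r ^ 2 := by rw [hγ]; ring
    rw [k4]
    rw [abs_le] at *
    constructor <;> linarith [k1.1, k1.2, k2.1, k2.2]
  refine ⟨hVc, ?_, hVd, ?_, ?_, by rw [hV0]; exact zero_le_one, ?_, ?_⟩
  · apply continuousOn_Icc_of_linear_bound (C := Λ * (1 + β * R ^ 2) + γ)
    · apply ContinuousOn.mul
      · exact continuousOn_const.div (by fun_prop) fun r hr => by
          have := hr.1; positivity
      · have h1 := hfc.mono (Ioc_subset_Icc_self (a := 0) (b := R))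
        exact (h1.sub hVc').sub ((continuousOn_const.mul h1).mul (by fun_prop))
    · intro r hr
      have hr' : r ∈ Icc 0 R := ⟨hr.1.le, hr.2⟩
      obtain ⟨Y, hY1, -, hY3⟩ := hY hr
      obtain ⟨b1, b2⟩ := hfb r hr'
      rw [hG0, sub_zero, hY3, abs_mul, abs_of_pos hr.1, mul_comm]
      refine mul_le_mul_of_nonneg_right ?_ hr.1.le
      have c1 : β * r ^ 2 ≤ β * R ^ 2 := mul_le_mul_of_nonneg_left (hsq r hr') hβ
      have c2 : Λ * metricF κ h u r ≤ Λ * (1 + β * R ^ 2) := by gcongr; linarith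
      have c3 : 0 ≤ Λ * metricF κ h u r := by positivity
      rw [abs_le] at *
      constructor <;> linarith [hY1.1, hY1.2]
  · intro r hr
    have h0 : r ≠ 0 := hr.1.ne'
    have hr' : r ∈ Icc 0 R := Ioo_subset_Icc_self hr
    obtain ⟨X, hX0, hX1, hX2⟩ := hfd r hr
    obtain ⟨Y, hY1, hY2, hY3⟩ := hY ⟨hr.1, hr.2.le⟩
    obtain ⟨b1, b2⟩ := hfb r hr'
    set g := -Λ / 3 * metricF κ h u r - Y + X * (1 - Λ * r ^ 2) / 2 with hg
    have hJ : |g - coefG Λ κ h u r / r| ≤ δ := by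
      have e : g - coefG Λ κ h u r / r = X * (1 - Λ * r ^ 2) / 2 - 3 / 2 * Y := by
        rw [hY3, hg]; field_simp; ring
      have k1 : |X * (1 - Λ * r ^ 2)| ≤ γ := by
        rw [abs_mul, hγ]
        have c1 : 0 ≤ Λ * r ^ 2 := by positivity
        have c2 : Λ * r ^ 2 ≤ Λ * R ^ 2 := mul_le_mul_of_nonneg_left (hsq r hr') hΛ.le
        apply mul_le_mul _ _ (abs_nonneg _) hβ
        · rw [abs_of_nonneg hX0]; exact hX1
        · rw [abs_le]; constructor <;> linarith
      rw [e]
      rw [abs_le] at *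
      constructor <;> linarith [k1.1, k1.2, hY1.1, hY1.2]
    refine ⟨g, ?_, ?_, hJ⟩
    · have hi : HasDerivAt (fun r : ℝ => 1 / (2 * r)) (-(1 / (2 * r ^ 2))) r := by
        have := (hasDerivAt_inv h0).const_mul (1 / 2 : ℝ)
        refine (this.congr_deriv (by field_simp)).congr_of_eventuallyEq ?_
        filter_upwards with s
        rw [one_div, mul_inv, one_div]
      have hd := hi.mul ((hX2.sub (hVd r hr)).sub ((hX2.const_mul Λ).mul (hasDerivAt_pow 2 r)))
      refine hd.congr_deriv ?_
      simp only [Pi.sub_apply, Pi.mul_apply]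
      rw [hY3, hY2, hg]
      field_simp
      ring
    · have e : coefG Λ κ h u r / r = -(Λ / 3) * metricF κ h u r + Y / 2 := by
        rw [hY3]; field_simp
      rw [e] at hJ
      have : Λ * 1 ≤ Λ * metricF κ h u r := by gcongr
      rw [abs_le] at *
      linarith [hJ.2, hY1.2]
  · intro r hr
    rcases eq_or_lt_of_le hr.1 with rfl | h0
    · exact hG0.le
    · obtain ⟨Y, hY1, -, hY3⟩ := hY ⟨h0, hr.2⟩
      obtain ⟨b1, b2⟩ := hfb r hr
      rw [hY3]
      have : Λ * 1 ≤ Λ * metricF κ h u r := by gcongr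
      rw [abs_le] at hY1
      exact mul_nonpos_of_nonneg_of_nonpos hr.1 (by linarith [hY1.2])
  · obtain ⟨Y, hY1, hY2, -⟩ := hY ⟨hR, le_rfl⟩
    obtain ⟨b1, b2⟩ := hfb R ⟨hR.le, le_rfl⟩
    rw [hY2]
    rw [abs_le] at hY1
    have c1 : -Y * R ^ 2 ≤ δ * R ^ 2 := by gcongr; linarith
    have c2 : 0 ≤ (metricF κ h u R - 1) * (Λ * R ^ 2 / 3 - 1) := by
      apply mul_nonneg (by linarith)
      have : 0 ≤ δ * R ^ 2 := mul_nonneg (by linarith) (by positivity)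
      linarith
    nlinarith
  · intro r hr
    have hr' : r ∈ Icc 0 R := Ioo_subset_Icc_self hr
    obtain ⟨Y, hY1, hY2, hY3⟩ := hY ⟨hr.1, hr.2.le⟩
    obtain ⟨b1, b2⟩ := hfb r hr'
    have e : 2 * coefG Λ κ h u r - metricFt Λ κ h u r / R
        = -(metricF κ h u r * (1 / R + Λ / 3 * r * (1 + (1 - r / R)))) + Y * (r + r ^ 2 / R) := by
      rw [hY3, hY2]; field_simp; ring
    rw [e]
    have c0 : r / R ≤ 1 := (div_le_one hR).2 hr.2.le
    have hr0 := hr.1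
    have c1 : 1 * (1 / R) ≤ metricF κ h u r * (1 / R + Λ / 3 * r * (1 + (1 - r / R))) := by
      apply mul_le_mul b1 _ (by positivity) (by positivity)
      have : 0 ≤ Λ / 3 * r * (1 + (1 - r / R)) :=
        mul_nonneg (by positivity) (by linarith)
      linarith
    have c2 : r + r ^ 2 / R ≤ 2 * R := by
      have : r ^ 2 / R ≤ R := by
        rw [div_le_iff₀ hR]; nlinarith [hr.2]
      linarith [hr.2]
    have c3 : Y * (r + r ^ 2 / R) ≤ δ * (2 * R) := by
      rw [abs_le] at hY1
      exact mul_le_mul (by linarith) c2 (by positivity) (by linarith)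
    linarith

lemma nonneg_of_hasDerivWithinAt_left {z : ℝ → ℝ} {d p q : ℝ} (hqp : q < p)
    (hd : HasDerivWithinAt z d (Ioo q p) p) (hle : ∀ s ∈ Ioo q p, z s ≤ z p) : 0 ≤ d := by
  rw [hasDerivWithinAt_iff_tendsto_slope' (by simp)] at hd
  have : (nhdsWithin p (Ioo q p)).NeBot := right_nhdsWithin_Ioo_neBot hqp
  refine ge_of_tendsto hd ?_
  filter_upwards [self_mem_nhdsWithin] with s hs
  rw [slope_def_field]
  exact div_nonneg_of_nonpos (by linarith [hle s hs]) (by linarith [hs.2])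

lemma nonneg_of_hasDerivWithinAt_right {z : ℝ → ℝ} {d p q : ℝ} (hpq : p < q)
    (hd : HasDerivWithinAt z d (Ioo p q) p) (hle : ∀ s ∈ Ioo p q, z p ≤ z s) : 0 ≤ d := by
  rw [hasDerivWithinAt_iff_tendsto_slope' (by simp)] at hd
  have : (nhdsWithin p (Ioo p q)).NeBot := left_nhdsWithin_Ioo_neBot hpq
  refine ge_of_tendsto hd ?_
  filter_upwards [self_mem_nhdsWithin] with s hs
  rw [slope_def_field]
  exact div_nonneg (by linarith [hle s hs]) (by linarith [hs.1])

/-- Increasing weight with derivative `exp (-2 s / R)`. -/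
def decayWeight (R s : ℝ) : ℝ := -(R / 2) * Real.exp (-2 / R * s)

lemma hasDerivAt_exp_decay (R s : ℝ) :
    HasDerivAt (fun s => Real.exp (-2 / R * s)) (-2 / R * Real.exp (-2 / R * s)) s := by
  have := ((hasDerivAt_id s).const_mul (-2 / R)).exp
  exact this.congr_deriv (by simp; ring)

lemma hasDerivAt_decayWeight {R : ℝ} (hR : 0 < R) (s : ℝ) :
    HasDerivAt (decayWeight R) (Real.exp (-2 / R * s)) s :=
  ((hasDerivAt_exp_decay R s).const_mul (-(R / 2))).congr_deriv (by field_simp)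

lemma exp_decay_bounds {R s : ℝ} (hR : 0 < R) (hs : s ∈ Icc 0 R) :
    1 / 9 ≤ Real.exp (-2 / R * s) ∧ Real.exp (-2 / R * s) ≤ 1 := by
  have h1 : -2 / R * s = -(2 * (s / R)) := by ring
  have h2 : 0 ≤ s / R := div_nonneg hs.1 hR.le
  have h3 : s / R ≤ 1 := (div_le_one hR).2 hs.2
  rw [h1]
  constructor
  · have h4 : Real.exp (2 * (s / R)) ≤ 9 := by
      calc Real.exp (2 * (s / R)) ≤ Real.exp (1 + 1) := by gcongr; linarith
        _ = Real.exp 1 * Real.exp 1 := Real.exp_add _ _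
        _ ≤ 3 * 3 := by
          have := Real.exp_one_lt_d9
          gcongr <;> linarith
        _ = 9 := by norm_num
    rw [Real.exp_neg, ← one_div]
    exact one_div_le_one_div_of_le (Real.exp_pos _) h4
  · exact Real.exp_le_one_iff.2 (by linarith)

lemma decayWeight_bounds {R s t : ℝ} (hR : 0 < R) (hs : s ∈ Icc 0 R) (ht : t ∈ Icc 0 R) :
    |s - t| / 9 ≤ |decayWeight R s - decayWeight R t| ∧
      |decayWeight R s - decayWeight R t| ≤ |s - t| := by
  wlog hst : t ≤ s generalizing s t
  · have := this ht hs (by linarith)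
    rwa [abs_sub_comm, abs_sub_comm (decayWeight R t)] at this
  have hd : Differentiable ℝ (decayWeight R) := fun x =>
    (hasDerivAt_decayWeight hR x).differentiableAt
  have hmem : ∀ x ∈ interior (Icc 0 R), x ∈ Icc 0 R := fun x hx => interior_subset hx
  have h1 := (convex_Icc 0 R).mul_sub_le_image_sub_of_le_deriv hd.continuous.continuousOn
    hd.differentiableOn (C := 1 / 9) (fun x hx => by
      rw [(hasDerivAt_decayWeight hR x).deriv]
      exact (exp_decay_bounds hR (hmem x hx)).1) t ht s hs hst
  have h2 := (convex_Icc 0 R).image_sub_le_mul_sub_of_deriv_le hd.continuous.continuousOn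
    hd.differentiableOn (C := 1) (fun x hx => by
      rw [(hasDerivAt_decayWeight hR x).deriv]
      exact (exp_decay_bounds hR (hmem x hx)).2) t ht s hs hst
  rw [abs_of_nonneg (by linarith : 0 ≤ s - t), abs_of_nonneg (by linarith)]
  constructor <;> linarith

lemma decayWeight_strictMono {R : ℝ} (hR : 0 < R) : StrictMono (decayWeight R) :=
  strictMono_of_deriv_pos fun s => by
    rw [(hasDerivAt_decayWeight hR s).deriv]; exact Real.exp_pos _

/-- If the oscillation of `v` is dominated by that of `A * decayWeight` up to `η`, with equality
at the pair `q < p`, then the evolution operator contracts the difference at this pair. -/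
lemma two_point_damping {R δ A η p q : ℝ} {V G v k vb : ℝ → ℝ} (hc : IsDampedCoeff R δ V G)
    (hR : 0 < R) (hδ0 : 0 ≤ δ) (hδ : 22 * δ * R ^ 2 ≤ 1) (hA : 0 ≤ A) (hη : 0 ≤ η)
    (hv : ∀ r ∈ Icc 0 R, HasDerivWithinAt v (k r) (Icc 0 R) r)
    (hbc : ContinuousOn vb (Icc 0 R))
    (hbd : ∀ r ∈ Ioo 0 R, HasDerivAt vb ((v r - vb r) / r) r)
    (hbb : ∀ r ∈ Icc 0 R, |v r - vb r| ≤ A * R + η)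
    (hq : 0 ≤ q) (hqp : q < p) (hp : p ≤ R)
    (hosc : ∀ s ∈ Icc 0 R, ∀ t ∈ Icc 0 R,
      v s - v t ≤ A * |decayWeight R s - decayWeight R t| + η)
    (heq : v p - v q = A * (decayWeight R p - decayWeight R q) + η) :
    V p / 2 * k p + G p * (v p - vb p) - (V q / 2 * k q + G q * (v q - vb q))
      ≤ -(1 / (2 * R)) * (A * (decayWeight R p - decayWeight R q)) + δ * η * R := by
  have hpm : p ∈ Icc 0 R := ⟨hq.trans hqp.le, hp⟩
  have hqm : q ∈ Icc 0 R := ⟨hq, hqp.le.trans hp⟩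
  have hΨ := decayWeight_strictMono hR
  have hz : ∀ r ∈ Icc 0 R, HasDerivWithinAt (fun s => v s - A * decayWeight R s)
      (k r - A * Real.exp (-2 / R * r)) (Icc 0 R) r := fun r hr =>
    (hv r hr).sub ((hasDerivAt_decayWeight hR r).const_mul A).hasDerivWithinAt
  have hup : ∀ s ∈ Icc q R, v s - A * decayWeight R s ≤ v p - A * decayWeight R p := by
    intro s hs
    have := hosc s ⟨hq.trans hs.1, hs.2⟩ q hqm
    rw [abs_of_nonneg (by linarith [hΨ.monotone hs.1])] at this
    linarith
  have hdn : ∀ s ∈ Icc 0 p, v q - A * decayWeight R q ≤ v s - A * decayWeight R s := by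
    intro s hs
    have := hosc p hpm s ⟨hs.1, hs.2.trans hp⟩
    rw [abs_of_nonneg (by linarith [hΨ.monotone hs.2])] at this
    linarith
  have hbp : V p * (k p - A * Real.exp (-2 / R * p)) ≤ 0 := by
    have h1 : 0 ≤ k p - A * Real.exp (-2 / R * p) :=
      nonneg_of_hasDerivWithinAt_left hqp ((hz p hpm).mono fun s hs =>
        ⟨hq.trans hs.1.le, hs.2.le.trans hp⟩) fun s hs => hup s ⟨hs.1.le, hs.2.le.trans hp⟩
    rcases eq_or_lt_of_le hp with rfl | hpR
    · exact mul_nonpos_of_nonpos_of_nonneg hc.V_end h1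
    · have h2 : 0 ≤ -(k p - A * Real.exp (-2 / R * p)) :=
        nonneg_of_hasDerivWithinAt_right hpR ((hz p hpm).neg.mono fun s hs =>
          ⟨hpm.1.trans hs.1.le, hs.2.le⟩) fun s hs =>
            neg_le_neg (hup s ⟨hqp.le.trans hs.1.le, hs.2.le⟩)
      rw [le_antisymm (by linarith) h1, mul_zero]
  have hbq : 0 ≤ V q * (k q - A * Real.exp (-2 / R * q)) := by
    have h1 : 0 ≤ k q - A * Real.exp (-2 / R * q) :=
      nonneg_of_hasDerivWithinAt_right hqp ((hz q hqm).mono fun s hs =>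
        ⟨hq.trans hs.1.le, hs.2.le.trans hp⟩) fun s hs => hdn s ⟨hq.trans hs.1.le, hs.2.le⟩
    rcases eq_or_lt_of_le hq with rfl | hq0
    · exact mul_nonneg hc.V_zero h1
    · have h2 : 0 ≤ -(k q - A * Real.exp (-2 / R * q)) :=
        nonneg_of_hasDerivWithinAt_left hq0 ((hz q hqm).neg.mono fun s hs =>
          ⟨hs.1.le, hs.2.le.trans hqm.2⟩) fun s hs =>
            neg_le_neg (hdn s ⟨hs.1.le, hs.2.le.trans hqp.le⟩)
      rw [le_antisymm (by linarith) h1, mul_zero]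
  have hsub : Icc q p ⊆ Icc 0 R := Icc_subset_Icc hq hp
  have hvc : ContinuousOn v (Icc q p) := fun r hr =>
    ((hv r (hsub hr)).continuousWithinAt).mono hsub
  have hΨc : Continuous (decayWeight R) := by unfold decayWeight; fun_prop
  set W : ℝ → ℝ := fun s => V s / 2 * (A * Real.exp (-2 / R * s)) + G s * (v s - vb s)
    - G s * (v s - v q - A * (decayWeight R s - decayWeight R q) - η)
    + (1 / (2 * R)) * (A * decayWeight R s) - δ * η * s with hW
  have hWc : ContinuousOn W (Icc q p) := by
    have c1 := hc.continuousOn_V.mono hsub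
    have c2 := hc.continuousOn_G.mono hsub
    have c3 := hbc.mono hsub
    have c4 : ContinuousOn (decayWeight R) (Icc q p) := hΨc.continuousOn
    fun_prop
  have hWd : ∀ r ∈ Ioo q p, ∃ w, HasDerivAt W w r ∧ w ≤ 0 := by
    intro r hr
    have hr0 : r ∈ Ioo 0 R := ⟨hq.trans_lt hr.1, hr.2.trans_le hp⟩
    have hr1 : r ∈ Icc 0 R := Ioo_subset_Icc_self hr0
    have hrne : r ≠ 0 := hr0.1.ne'
    obtain ⟨g, hg1, hg2, hg3⟩ := hc.hasDerivAt_G r hr0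
    have dv : HasDerivAt v (k r) r := (hv r hr1).hasDerivAt (Icc_mem_nhds hr0.1 hr0.2)
    have dV := hc.hasDerivAt_V r hr0
    have dE := hasDerivAt_exp_decay R r
    have dΨ := hasDerivAt_decayWeight hR r
    have dW := ((((dV.div_const 2).mul (dE.const_mul A)).add (hg1.mul (dv.sub (hbd r hr0)))).sub
      (hg1.mul (((dv.sub_const (v q)).sub ((dΨ.sub_const (decayWeight R q)).const_mul A)).sub_const
        η))).add ((dΨ.const_mul A).const_mul (1 / (2 * R))) |>.sub
          ((hasDerivAt_id r).const_mul (δ * η))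
    refine ⟨_, dW, ?_⟩
    simp only [Pi.sub_apply]
    set E := Real.exp (-2 / R * r)
    set m := v r - v q - A * (decayWeight R r - decayWeight R q) - η with hm
    have hm0 : m ≤ 0 := by linarith [hup r ⟨hr.1.le, hr1.2⟩]
    obtain ⟨hE1, hE2⟩ := exp_decay_bounds hR hr1
    have t1 : A * E * (2 * G r - V r / R) ≤ A * E * -(1 / R - 2 * R * δ) :=
      mul_le_mul_of_nonneg_left (hc.damping r hr0) (mul_nonneg hA (by linarith))
    have t2 : (g - G r / r) * (v r - vb r) ≤ δ * (A * R + η) := by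
      refine (le_abs_self _).trans ?_
      rw [abs_mul]
      exact mul_le_mul hg3 (hbb r hr1) (abs_nonneg _) hδ0
    have t3 : 0 ≤ g * m := mul_nonneg_of_nonpos_of_nonpos hg2 hm0
    have t4 : A * R * δ ≤ 9 * (A * R * δ) * E := by
      have : 0 ≤ A * R * δ := by positivity
      nlinarith
    have t5 : 11 * R * δ * (A * E) ≤ 1 / (2 * R) * (A * E) := by
      apply mul_le_mul_of_nonneg_right _ (mul_nonneg hA (by linarith))
      rw [le_div_iff₀ (by positivity)]
      linarith
    have e1 : (1:ℝ) / R = 2 * (1 / (2 * R)) := by field_simp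
    have e2 : G r * ((v r - vb r) / r) = G r / r * (v r - vb r) := by field_simp
    rw [e1] at t1
    have e3 : A * E * (2 * G r - V r / R)
      = 2 * G r / 2 * (A * E) + V r / 2 * (A * (-2 / R * E)) + G r * (A * E) := by
      field_simp; ring
    rw [e3] at t1
    linarith
  have hanti : AntitoneOn W (Icc q p) := by
    apply antitoneOn_of_deriv_nonpos (convex_Icc q p) hWc
    · rw [interior_Icc]
      intro r hr
      obtain ⟨w, hw, -⟩ := hWd r hr
      exact hw.differentiableAt.differentiableWithinAt
    · rw [interior_Icc]
      intro r hr
      obtain ⟨w, hw, hw0⟩ := hWd r hr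
      rwa [hw.deriv]
  have hfin := hanti (left_mem_Icc.2 hqp.le) (right_mem_Icc.2 hqp.le) hqp.le
  simp only [hW] at hfin
  have e4 : v p - v q - A * (decayWeight R p - decayWeight R q) - η = 0 := by linarith
  have e5 : v q - v q - A * (decayWeight R q - decayWeight R q) - η = -η := by ring
  rw [e4, e5] at hfin
  have t6 : G q * η ≤ 0 := mul_nonpos_of_nonpos_of_nonneg (hc.G_nonpos q hqm) hη
  have t7 : δ * η * (p - q) ≤ δ * η * R :=
    mul_le_mul_of_nonneg_left (by linarith) (mul_nonneg hδ0 hη)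
  linarith

lemma IsC1Solution.continuousOn_slice {Λ κ R : ℝ} {h : ℝ → ℝ → ℝ} (hs : IsC1Solution Λ κ R h)
    {u : ℝ} (hu : 0 ≤ u) : ContinuousOn (h u) (Icc 0 R) :=
  hs.1.comp (f := fun r => (u, r)) (by fun_prop) fun _ hr => ⟨hu, hr⟩

lemma IsC1Solution.hasDerivWithinAt_slice {Λ κ R : ℝ} {h : ℝ → ℝ → ℝ}
    (hs : IsC1Solution Λ κ R h) {u r : ℝ} (hu : 0 ≤ u) (hr : r ∈ Icc 0 R) :
    HasDerivWithinAt (h u) (pdR R h u r) (Icc 0 R) r :=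
  (hs.2.1 u hu r hr).2.hasDerivWithinAt

/-- A bound on `∂_r h` is a Lipschitz constant in `r`. -/
lemma IsC1Solution.lipschitz_slice {Λ κ R C : ℝ} {h : ℝ → ℝ → ℝ}
    (hs : IsC1Solution Λ κ R h) {u : ℝ} (hu : 0 ≤ u)
    (hC : ∀ r ∈ Icc 0 R, |pdR R h u r| ≤ C) :
    ∀ s ∈ Icc 0 R, ∀ t ∈ Icc 0 R, |h u s - h u t| ≤ C * |s - t| := fun _ hs' _ ht' =>
  Convex.norm_image_sub_le_of_norm_hasDerivWithin_le
    (fun _ hr => hs.hasDerivWithinAt_slice hu hr) hC (convex_Icc 0 R) ht' hs'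

/-- The reduced equation extends continuously to the center. -/
lemma IsC1Solution.pdU_eq {Λ κ R : ℝ} {h : ℝ → ℝ → ℝ} (hs : IsC1Solution Λ κ R h) (hR : 0 < R)
    {u : ℝ} (hu : 0 ≤ u) (hV : ContinuousOn (metricFt Λ κ h u) (Icc 0 R))
    (hG : ContinuousOn (coefG Λ κ h u) (Icc 0 R)) (ha : ContinuousOn (radAvg h u) (Icc 0 R))
    {r : ℝ} (hr : r ∈ Icc 0 R) :
    pdU h u r = metricFt Λ κ h u r / 2 * pdR R h u r
      + coefG Λ κ h u r * (h u r - radAvg h u r) := by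
  rcases eq_or_lt_of_le hr.1 with rfl | h0
  · have hc1 : ContinuousOn (fun r => pdU h u r) (Icc 0 R) :=
      hs.2.2.1.comp (f := fun r => (u, r)) (by fun_prop) fun _ hr => ⟨hu, hr⟩
    have hc2 : ContinuousOn (fun r => pdR R h u r) (Icc 0 R) :=
      hs.2.2.2.1.comp (f := fun r => (u, r)) (by fun_prop) fun _ hr => ⟨hu, hr⟩
    have hc3 := hs.continuousOn_slice hu
    have hc : ContinuousOn (fun r => pdU h u r - (metricFt Λ κ h u r / 2 * pdR R h u r
      + coefG Λ κ h u r * (h u r - radAvg h u r))) (Icc 0 R) := by fun_prop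
    have ht := (hc 0 hr).mono (Ioc_subset_Icc_self)
    have hne : (nhdsWithin (0:ℝ) (Ioc 0 R)).NeBot := left_nhdsWithin_Ioc_neBot hR
    have h1 : Filter.Tendsto (fun r => pdU h u r - (metricFt Λ κ h u r / 2 * pdR R h u r
      + coefG Λ κ h u r * (h u r - radAvg h u r))) (nhdsWithin 0 (Ioc 0 R)) (nhds 0) := by
      refine tendsto_const_nhds.congr' ?_
      filter_upwards [self_mem_nhdsWithin] with s hs'
      linarith [hs.2.2.2.2 u hu s hs']
    exact sub_eq_zero.1 (tendsto_nhds_unique ht h1)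
  · linarith [hs.2.2.2.2 u hu r ⟨h0, hr.2⟩]

/-- Two-point maximum principle: the modulus `A₀ e^{-u/(2R)} |Ψ x - Ψ y|`, up to an arbitrarily
small error `η`, is propagated by the evolution. -/
lemma IsC1Solution.two_point_bound {Λ κ R δ ε A₀ η : ℝ} {h : ℝ → ℝ → ℝ}
    (hs : IsC1Solution Λ κ R h) (hR : 0 < R) (hε : 0 ≤ ε)
    (hsmall : ∀ u, 0 ≤ u → ∀ r ∈ Icc 0 R, |pdR R h u r| ≤ ε)
    (hcoef : ∀ u, 0 ≤ u → IsDampedCoeff R δ (metricFt Λ κ h u) (coefG Λ κ h u))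
    (hδ0 : 0 ≤ δ) (hδ : 22 * δ * R ^ 2 ≤ 1) (hA : 0 ≤ A₀) (hη : 0 < η)
    (hinit : ∀ x ∈ Icc 0 R, ∀ y ∈ Icc 0 R,
      h 0 x - h 0 y ≤ A₀ * |decayWeight R x - decayWeight R y|)
    {T x y : ℝ} (hT : 0 ≤ T) (hx : x ∈ Icc 0 R) (hy : y ∈ Icc 0 R) :
    h T x - h T y < A₀ * Real.exp (-(1 / (2 * R)) * T) * |decayWeight R x - decayWeight R y|
      + η * Real.exp ((δ * R + 1) * T) := by
  by_contra! hcon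
  set c := 1 / (2 * R) with hc
  set K := δ * R + 1 with hK
  set Φ : ℝ × ℝ × ℝ → ℝ := fun p => h p.1 p.2.1 - h p.1 p.2.2
    - A₀ * Real.exp (-c * p.1) * |decayWeight R p.2.1 - decayWeight R p.2.2|
    - η * Real.exp (K * p.1) with hΦ
  have hΨc : Continuous (decayWeight R) := by unfold decayWeight; fun_prop
  set B : Set (ℝ × ℝ × ℝ) := Icc 0 T ×ˢ Icc 0 R ×ˢ Icc 0 R with hB
  have hΦc : ContinuousOn Φ B := by
    have c1 : ContinuousOn (fun p : ℝ × ℝ × ℝ => h p.1 p.2.1) B :=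
      hs.1.comp (f := fun p : ℝ × ℝ × ℝ => (p.1, p.2.1)) (by fun_prop)
        fun p hp => ⟨hp.1.1, hp.2.1⟩
    have c2 : ContinuousOn (fun p : ℝ × ℝ × ℝ => h p.1 p.2.2) B :=
      hs.1.comp (f := fun p : ℝ × ℝ × ℝ => (p.1, p.2.2)) (by fun_prop)
        fun p hp => ⟨hp.1.1, hp.2.2⟩
    have c3 : Continuous (fun p : ℝ × ℝ × ℝ =>
        A₀ * Real.exp (-c * p.1) * |decayWeight R p.2.1 - decayWeight R p.2.2|) := by fun_prop
    have c4 : Continuous (fun p : ℝ × ℝ × ℝ => η * Real.exp (K * p.1)) := by fun_prop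
    exact ((c1.sub c2).sub c3.continuousOn).sub c4.continuousOn
  have hBc : IsCompact B := isCompact_Icc.prod (isCompact_Icc.prod isCompact_Icc)
  have hSc : IsCompact (B ∩ Φ ⁻¹' Ici 0) :=
    hBc.of_isClosed_subset (hΦc.preimage_isClosed_of_isClosed hBc.isClosed isClosed_Ici)
      inter_subset_left
  obtain ⟨⟨u, p, q⟩, ⟨⟨hu, hp, hq⟩, h0⟩, hmin⟩ := hSc.exists_isMinOn (f := Prod.fst)
    ⟨(T, x, y), ⟨⟨hT, le_rfl⟩, hx, hy⟩, by simp only [hΦ, mem_preimage, mem_Ici]; linarith⟩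
    continuous_fst.continuousOn
  simp only at hu hp hq
  have hbefore : ∀ u' ∈ Ico 0 u, ∀ s ∈ Icc 0 R, ∀ t ∈ Icc 0 R, Φ (u', s, t) < 0 := by
    intro u' hu' s hs' t ht'
    by_contra! hge
    have : u ≤ u' := hmin (a := (u', s, t)) ⟨⟨⟨hu'.1, hu'.2.le.trans hu.2⟩, hs', ht'⟩, hge⟩
    linarith [hu'.2]
  have hupos : 0 < u := by
    rcases eq_or_lt_of_le hu.1 with h | h
    · subst h
      have h1 : (0:ℝ) ≤ Φ (0, p, q) := h0
      simp only [hΦ, mul_zero, Real.exp_zero, mul_one] at h1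
      linarith [hinit p hp q hq]
    · exact h
  have hle : ∀ s ∈ Icc 0 R, ∀ t ∈ Icc 0 R, Φ (u, s, t) ≤ 0 := by
    intro s hs' t ht'
    have hcs : ContinuousOn (fun u' => Φ (u', s, t)) (Icc 0 T) :=
      hΦc.comp (f := fun u' : ℝ => (u', s, t)) (by fun_prop) fun _ hr => ⟨hr, hs', ht'⟩
    have h1 := (hcs u hu).mono (s := Ioo 0 u) fun a ha => ⟨ha.1.le, ha.2.le.trans hu.2⟩
    have hne : (nhdsWithin u (Ioo 0 u)).NeBot := right_nhdsWithin_Ioo_neBot hupos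
    refine le_of_tendsto h1 ?_
    filter_upwards [self_mem_nhdsWithin] with a ha
    exact (hbefore a ⟨ha.1.le, ha.2⟩ s hs' t ht').le
  have hzero : Φ (u, p, q) = 0 := le_antisymm (hle p hp q hq) h0
  set A := A₀ * Real.exp (-c * u) with hAdef
  set η' := η * Real.exp (K * u) with hη'
  have hA' : 0 ≤ A := by positivity
  have hη'0 : 0 < η' := by positivity
  have hosc : ∀ s ∈ Icc 0 R, ∀ t ∈ Icc 0 R,
      h u s - h u t ≤ A * |decayWeight R s - decayWeight R t| + η' := by
    intro s hs' t ht'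
    have := hle s hs' t ht'
    simp only [hΦ] at this
    linarith
  have heq : h u p - h u q = A * |decayWeight R p - decayWeight R q| + η' := by
    simp only [hΦ] at hzero
    linarith
  have hcu := hcoef u hu.1
  obtain ⟨-, hac, had⟩ := radAvg_regularity hR (hs.continuousOn_slice hu.1)
    (hs.lipschitz_slice hu.1 (hsmall u hu.1)) hε
  have hbb : ∀ r ∈ Icc 0 R, |h u r - radAvg h u r| ≤ A * R + η' := by
    intro r hr
    have hrr : Icc 0 r ⊆ Icc 0 R := Icc_subset_Icc_right hr.2
    refine abs_sub_radAvg_le hr.1 ((hs.continuousOn_slice hu.1).mono hrr) fun s hs' => ?_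
    have d1 := (decayWeight_bounds hR hr (hrr hs')).2
    have d2 : |r - s| ≤ R := by
      rw [abs_le]; constructor <;> linarith [hs'.1, hs'.2, hr.1, hr.2]
    have d3 : A * |decayWeight R r - decayWeight R s| ≤ A * R :=
      mul_le_mul_of_nonneg_left (d1.trans d2) hA'
    have d4 := hosc r hr s (hrr hs')
    have d5 := hosc s (hrr hs') r hr
    rw [abs_sub_comm (decayWeight R s)] at d5
    rw [abs_le]
    constructor <;> linarith
  have hdt : 0 ≤ pdU h u p - pdU h u q - A * -c * |decayWeight R p - decayWeight R q|
      - η' * K := by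
    have e1 := (hs.2.1 u hu.1 p hp).1.hasDerivWithinAt
    have e2 := (hs.2.1 u hu.1 q hq).1.hasDerivWithinAt
    have e3 : ∀ b a : ℝ, HasDerivWithinAt (fun u => b * Real.exp (a * u))
        (b * Real.exp (a * u) * a) (Ici 0) u := fun b a =>
      ((((hasDerivAt_id u).const_mul a).exp.const_mul b).congr_deriv
        (by simp; ring)).hasDerivWithinAt
    have e4 := ((e1.sub e2).sub ((e3 A₀ (-c)).mul_const
      |decayWeight R p - decayWeight R q|)).sub (e3 η K)
    refine nonneg_of_hasDerivWithinAt_left hupos (e4.mono fun a ha => ha.1.le) fun a ha => ?_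
    exact (hbefore a ⟨ha.1.le, ha.2⟩ p hp q hq).le.trans hzero.ge
  have hpde := fun {r : ℝ} (hr : r ∈ Icc 0 R) =>
    hs.pdU_eq hR hu.1 hcu.continuousOn_V hcu.continuousOn_G hac hr
  have hΨm := (decayWeight_strictMono hR).monotone
  have hkey : pdU h u p - pdU h u q
      ≤ -c * (A * |decayWeight R p - decayWeight R q|) + δ * η' * R := by
    rw [hpde hp, hpde hq]
    rcases lt_trichotomy q p with hlt | heq' | hlt
    · rw [abs_of_nonneg (sub_nonneg.2 (hΨm hlt.le))] at heq ⊢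
      exact two_point_damping hcu hR hδ0 hδ hA' hη'0.le
        (fun r hr => hs.hasDerivWithinAt_slice hu.1 hr) hac had hbb hq.1 hlt hp.2 hosc heq
    · subst heq'
      simp only [sub_self, abs_zero, mul_zero] at heq ⊢
      linarith
    · rw [abs_sub_comm, abs_of_nonneg (sub_nonneg.2 (hΨm hlt.le))] at heq ⊢
      have := two_point_damping (v := fun r => -h u r) (k := fun r => -pdR R h u r)
        (vb := fun r => -radAvg h u r) hcu hR hδ0 hδ hA' hη'0.le
        (fun r hr => (hs.hasDerivWithinAt_slice hu.1 hr).neg) hac.neg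
        (fun r hr => (had r hr).neg.congr_deriv (by ring))
        (fun r hr => by
          rw [show -h u r - -radAvg h u r = -(h u r - radAvg h u r) by ring, abs_neg]
          exact hbb r hr) hp.1 hlt hq.2
        (fun s hs' t ht' => by
          have := hosc t ht' s hs'
          rw [abs_sub_comm] at this
          linarith) (by linarith)
      linarith
  have hfin : η' * K = δ * η' * R + η' := by rw [hK]; ring
  linarith

/-- A one-sided derivative is bounded by a Lipschitz constant. -/
lemma abs_le_of_hasDerivWithinAt_Icc {g : ℝ → ℝ} {R C d r : ℝ} (hR : 0 < R) (hr : r ∈ Icc 0 R)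
    (hd : HasDerivWithinAt g d (Icc 0 R) r)
    (hl : ∀ s ∈ Icc 0 R, |g s - g r| ≤ C * |s - r|) : |d| ≤ C := by
  have hne : (nhdsWithin r (Icc 0 R \ {r})).NeBot :=
    accPt_principal_iff_nhdsWithin.1 (uniqueDiffOn_Icc hR r hr).accPt
  rw [hasDerivWithinAt_iff_tendsto_slope] at hd
  refine le_of_tendsto hd.abs ?_
  filter_upwards [self_mem_nhdsWithin] with s hs
  have h1 : 0 < |s - r| := abs_pos.2 (sub_ne_zero.2 hs.2)
  rw [slope_def_field, abs_div, div_le_iff₀ h1]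
  exact hl s hs.1

/-- Exponential decay of the energy `ℰ₁(u) = sup_{0≤r≤R}|∂_r h(u,r)|`:
there are `ε, C, Ĥ > 0` (depending only on `Λ, κ, R`) such that any C¹ solution with
`sup(|h|+|∂_r h|) < ε` satisfies `ℰ₁(u) ≤ C ℰ₁(0) e^{−2Ĥu}` for all `u ≥ 0`. -/
theorem energy_exponential_decay
    (Λ κ R : ℝ) (hΛ : 0 < Λ) (hκ : 0 < κ) (hR : Real.sqrt (3 / Λ) < R) :
    ∃ ε > (0:ℝ), ∃ C > (0:ℝ), ∃ Hhat > (0:ℝ), ∀ h : ℝ → ℝ → ℝ, IsC1Solution Λ κ R h →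
      (∀ u ∈ Ici (0:ℝ), ∀ r ∈ Icc (0:ℝ) R, |h u r| + |pdR R h u r| < ε) →
      ∀ u ∈ Ici (0:ℝ),
        sSup ((fun r => |pdR R h u r|) '' Icc 0 R)
          ≤ C * sSup ((fun r => |pdR R h 0 r|) '' Icc 0 R) * Real.exp (-2 * Hhat * u) := by
  have hR0 : 0 < R := (Real.sqrt_nonneg _).trans_lt hR
  have hR2 : 0 < Λ * R ^ 2 / 3 - 1 := by
    have h1 : 3 / Λ < R ^ 2 := (Real.sqrt_lt' hR0).1 hR
    rw [div_lt_iff₀ hΛ] at h1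
    linarith
  set δ := min (Λ / 6) (min ((Λ * R ^ 2 / 3 - 1) / R ^ 2) (1 / (22 * R ^ 2))) with hδ
  have hδ0 : 0 < δ := by
    rw [hδ]
    exact lt_min (by positivity) (lt_min (by positivity) (by positivity))
  have hδ1 : δ ≤ Λ / 6 := min_le_left _ _
  have hδ2 : δ * R ^ 2 ≤ Λ * R ^ 2 / 3 - 1 := by
    rw [← le_div_iff₀ (by positivity)]
    exact (min_le_right _ _).trans (min_le_left _ _)
  have hδ3 : 22 * δ * R ^ 2 ≤ 1 := by
    have : δ ≤ 1 / (22 * R ^ 2) := (min_le_right _ _).trans (min_le_right _ _)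
    rw [le_div_iff₀ (by positivity)] at this
    linarith
  set P := κ * Real.exp (κ / 2 * R ^ 2) * (1 + Λ * R ^ 2) with hP
  have hP0 : 0 < P := by positivity
  set ε := min 1 (δ / P) with hε
  have hε0 : 0 < ε := lt_min one_pos (by positivity)
  have hε1 : ε ≤ 1 := min_le_left _ _
  have hεδ : 2 * (κ / 2 * ε ^ 2 * Real.exp (κ / 2 * R ^ 2) * (1 + Λ * R ^ 2)) ≤ δ := by
    have h1 : ε * P ≤ δ := (le_div_iff₀ hP0).1 (min_le_right _ _)
    have h2 : ε ^ 2 * P ≤ ε * P := by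
      apply mul_le_mul_of_nonneg_right _ hP0.le
      rw [sq]
      exact mul_le_of_le_one_left hε0.le hε1
    calc _ = ε ^ 2 * P := by rw [hP]; ring
      _ ≤ δ := h2.trans h1
  refine ⟨ε, hε0, 9, by norm_num, 1 / (4 * R), by positivity, ?_⟩
  intro h hs hsm u hu
  have hsmall : ∀ u, 0 ≤ u → ∀ r ∈ Icc 0 R, |pdR R h u r| ≤ ε := fun u hu r hr => by
    linarith [hsm u hu r hr, abs_nonneg (h u r)]
  have hcoef : ∀ u, 0 ≤ u → IsDampedCoeff R δ (metricFt Λ κ h u) (coefG Λ κ h u) := fun u hu =>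
    isDampedCoeff_metricFt hΛ hκ hR0 hε0.le hε1 (hs.continuousOn_slice hu)
      (hs.lipschitz_slice hu (hsmall u hu)) hεδ hδ1 hδ2
  set E₀ := sSup ((fun r => |pdR R h 0 r|) '' Icc 0 R) with hE₀
  have hE : ∀ r ∈ Icc 0 R, |pdR R h 0 r| ≤ E₀ := fun r hr =>
    le_csSup ⟨ε, by rintro _ ⟨s, hs', rfl⟩; exact hsmall 0 le_rfl s hs'⟩ ⟨r, hr, rfl⟩
  have hE0 : 0 ≤ E₀ := (abs_nonneg _).trans (hE 0 ⟨le_rfl, hR0.le⟩)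
  have hinit : ∀ x ∈ Icc 0 R, ∀ y ∈ Icc 0 R,
      h 0 x - h 0 y ≤ 9 * E₀ * |decayWeight R x - decayWeight R y| := by
    intro x hx y hy
    have h1 := hs.lipschitz_slice le_rfl hE x hx y hy
    have h2 := mul_le_mul_of_nonneg_left (decayWeight_bounds hR0 hx hy).1 hE0
    linarith [le_abs_self (h 0 x - h 0 y)]
  have hbound : ∀ x ∈ Icc 0 R, ∀ y ∈ Icc 0 R,
      h u x - h u y ≤ 9 * E₀ * Real.exp (-(1 / (2 * R)) * u) * |x - y| := by
    intro x hx y hy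
    have h1 : h u x - h u y ≤ 9 * E₀ * Real.exp (-(1 / (2 * R)) * u)
        * |decayWeight R x - decayWeight R y| := by
      refine le_of_forall_pos_le_add fun η hη => ?_
      have hexp := Real.exp_pos ((δ * R + 1) * u)
      have := hs.two_point_bound hR0 hε0.le hsmall hcoef hδ0.le hδ3
        (by positivity : 0 ≤ 9 * E₀) (div_pos hη hexp) hinit hu hx hy
      rw [div_mul_cancel₀ _ hexp.ne'] at this
      exact this.le
    exact h1.trans (mul_le_mul_of_nonneg_left (decayWeight_bounds hR0 hx hy).2 (by positivity))
  have hrate : -2 * (1 / (4 * R)) * u = -(1 / (2 * R)) * u := by ring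
  rw [hrate]
  refine csSup_le ((nonempty_Icc.2 hR0.le).image _) ?_
  rintro _ ⟨r, hr, rfl⟩
  refine abs_le_of_hasDerivWithinAt_Icc hR0 hr (hs.hasDerivWithinAt_slice hu hr) fun s hs' => ?_
  have h1 := hbound s hs' r hr
  have h2 := hbound r hr s hs'
  rw [abs_sub_comm r s] at h2
  rw [abs_le]
  constructor <;> linarith
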